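/- Let X be a compact metric space, f : X → X a continuous map, Λ ⊆ X a closed f-invariant subset, and 𝓕 a Furstenberg family. Suppose (1) f|_Λ : Λ → Λ is minimal and equicontinuous, (2) for every ε > 0 the union ⋃_{x∈Λ} V_ε^s(x) is dense in X, (3) Λ ∩ R(f,𝓕) ≠ ∅, and (4) f is Δ(𝓕)*-transitive. Then for every integer n with 2 ≤ n < |Λ| + 1 there exists δ_n > 0 such that DC1_n^{δ_n}(X,f) is a residual subset of X^n. -/

import Mathlib

/-!
Say that `f^[i]` is `η`-close to the identity on `Λ` if `dist (f^[i] x) x ≤ η` for all `x ∈ Λ`.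
Since `f` is minimal and equicontinuous on `Λ`, a single almost-return of one point of `Λ` forces
this for the whole of `Λ` (`near_id_of_near_return`). Applied to the difference of two return times
of an `𝓕`-recurrent point of `Λ`, it shows that `Δ(𝓕)*`-transitivity connects any two open sets at
a time `i` for which `f^[i]` is arbitrarily close to the identity on `Λ` (`exists_transition`).

The key fact is `dense_shadow`: for each single `a ∈ Λ` and each `ε > 0`, the points whose orbit is
eventually `ε`-close to that of `a` are dense. Given an open `U`, choose by compactness finitely
many `k` such that each `z ∈ Λ` has some `f^[k] z` close to `a`. Connecting `U` successively to the
sets `f^{-k}(U)` along near-identity times `i` produces an open `W ⊆ U` with `f^[i + k] W ⊆ U` for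
each of these `k`. By density some `y ∈ W` shadows some `z ∈ Λ`; then for a suitable `k` the point
`f^[i + k] y ∈ U` shadows `f^[i + k] z`, which is close to `a`, and equicontinuity finishes.

Shadowing the same `a` in all coordinates gives a dense set of tuples that are eventually `ε`-close
to each other. Shadowing `n` distinct points of `Λ`, whose orbits stay a positive distance apart
(`exists_separation`), gives a dense set of tuples that are eventually `δ`-separated. A Baire
argument (`residual_fullUpperDensity`) turns a condition holding eventually, on a dense set, into one
holding with upper density one, on a residual set.
-/

open Filter Topology

/-- `V_ε^s(x)`: points whose forward orbit eventually stays ε-close (in limsup) to that of `x`. -/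
def Vs {X : Type*} [MetricSpace X] (f : X → X) (x : X) (ε : ℝ) : Set X :=
  {y | Filter.limsup (fun i : ℕ => dist (f^[i] x) (f^[i] y)) Filter.atTop ≤ ε}

open Classical in
/-- A DC1-`n`-`δ`-scrambled tuple. -/
def DC1Scrambled {X : Type*} [MetricSpace X] (f : X → X) {n : ℕ} (δ : ℝ)
    (x : Fin n → X) : Prop :=
  Filter.limsup (fun m : ℕ =>
      ((((Finset.range m).filter fun i => ∀ j k : Fin n, j < k →
        δ < dist (f^[i] (x j)) (f^[i] (x k))).card : ℝ) / m)) Filter.atTop = 1 ∧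
  ∀ ε : ℝ, 0 < ε → Filter.limsup (fun m : ℕ =>
      ((((Finset.range m).filter fun i => ∀ j k : Fin n, j < k →
        dist (f^[i] (x j)) (f^[i] (x k)) < ε).card : ℝ) / m)) Filter.atTop = 1

/-- `S` is a distal set for `f`. -/
def DistalSet {X : Type*} [MetricSpace X] (f : X → X) (S : Set X) : Prop :=
  ∀ n : ℕ, 2 ≤ n → ∀ x : Fin n → X, (∀ j, x j ∈ S) → Function.Injective x →
    ∃ c : ℝ, 0 < c ∧ ∀ i : ℕ, ∀ j k : Fin n, j < k → c ≤ dist (f^[i] (x j)) (f^[i] (x k))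

/-- `f` restricted to `Λ` is minimal: `Λ` is the orbit closure of each of its points. -/
def MinimalOn {X : Type*} [TopologicalSpace X] (f : X → X) (Λ : Set X) : Prop :=
  ∀ x ∈ Λ, closure (Set.range fun i : ℕ => f^[i] x) = Λ

/-- `f` restricted to `Λ` is equicontinuous. -/
def EquicontOnSet {X : Type*} [MetricSpace X] (f : X → X) (Λ : Set X) : Prop :=
  ∀ ε : ℝ, 0 < ε → ∃ δ : ℝ, 0 < δ ∧ ∀ x ∈ Λ, ∀ y ∈ Λ, dist x y ≤ δ →
    ∀ i : ℕ, dist (f^[i] x) (f^[i] y) ≤ ε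

/-- Topological transitivity. -/
def IsTransitive {Z : Type*} [TopologicalSpace Z] (h : Z → Z) : Prop :=
  ∀ U V : Set Z, IsOpen U → IsOpen V → U.Nonempty → V.Nonempty →
    ∃ i : ℕ, ∃ z ∈ U, h^[i] z ∈ V

/-- `N(x,ε)` : times at which the orbit of `x` returns ε-close to `x`. -/
def retTimes {X : Type*} [MetricSpace X] (f : X → X) (x : X) (ε : ℝ) : Set ℕ :=
  {i : ℕ | dist x (f^[i] x) ≤ ε}

/-- `R(f,𝓕)`: the set of `𝓕`-recurrent points. -/
def FRecurrent {X : Type*} [MetricSpace X] (f : X → X) (F : Set (Set ℕ)) : Set X :=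
  {x | ∀ ε : ℝ, 0 < ε → retTimes f x ε ∈ F}

/-- The dual family `𝓕*`. -/
def dualFamily (F : Set (Set ℕ)) : Set (Set ℕ) :=
  {A | ∀ B ∈ F, (A ∩ B).Nonempty}

/-- `Δ(A)`, the difference set of `A`. -/
def deltaSet (A : Set ℕ) : Set ℕ :=
  {i | ∃ j ∈ A, ∃ k ∈ A, j ≤ k ∧ i = k - j}

/-- `Δ(𝓕)`. -/
def deltaFamily (F : Set (Set ℕ)) : Set (Set ℕ) :=
  {B | ∃ A ∈ F, 0 ∈ A ∧ deltaSet A ⊆ B}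

/-- `𝓕`-transitivity: `N(U,V) ∈ 𝓕` for all nonempty open `U, V`. -/
def FTransitive {X : Type*} [TopologicalSpace X] (f : X → X) (F : Set (Set ℕ)) : Prop :=
  ∀ U V : Set X, IsOpen U → IsOpen V → U.Nonempty → V.Nonempty →
    {i : ℕ | ∃ x ∈ U, f^[i] x ∈ V} ∈ F

/-! ### Upper density one on residual sets -/

open Classical in
/-- The set of times `i` at which `P i` holds has upper density one, in a form that exhibits the
set of such sequences as a countable intersection. -/
def FullUpperDensity (P : ℕ → Prop) : Prop :=
  ∀ N : ℕ, ∃ m : ℕ, N < m ∧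
    (1 - 1 / ((N : ℝ) + 1)) * m < (((Finset.range m).filter fun i => P i).card : ℝ)

lemma FullUpperDensity.mono {P Q : ℕ → Prop} (h : FullUpperDensity P) (hPQ : ∀ i, P i → Q i) :
    FullUpperDensity Q := by
  classical
  intro N
  obtain ⟨m, hm, hlt⟩ := h N
  refine ⟨m, hm, ?_⟩
  refine lt_of_lt_of_le ?_ (Nat.cast_le.mpr (Finset.card_le_card
    (Finset.monotone_filter_right _ (fun i _ => hPQ i) :
      (Finset.range m).filter P ⊆ (Finset.range m).filter Q)))
  convert hlt

lemma FullUpperDensity.limsup_eq {P : ℕ → Prop} [DecidablePred P] (h : FullUpperDensity P) :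
    Filter.limsup (fun m : ℕ =>
      ((((Finset.range m).filter fun i => P i).card : ℝ) / m)) Filter.atTop = 1 := by
  set u : ℕ → ℝ := fun m => ((((Finset.range m).filter fun i => P i).card : ℝ) / m) with hu
  have hle : ∀ m, u m ≤ 1 := by
    intro m
    refine div_le_one_of_le₀ ?_ (Nat.cast_nonneg m)
    have := Finset.card_filter_le (Finset.range m) P
    rw [Finset.card_range] at this
    exact_mod_cast this
  have h0 : ∀ m, 0 ≤ u m := fun m => by positivity
  have hb : IsBoundedUnder (· ≤ ·) atTop u := isBoundedUnder_of ⟨1, hle⟩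
  have hcb : IsCoboundedUnder (· ≤ ·) atTop u :=
    (isBoundedUnder_of ⟨0, h0⟩ : IsBoundedUnder (· ≥ ·) atTop u).isCoboundedUnder_le
  apply le_antisymm
  · exact limsup_le_of_le hcb (Eventually.of_forall hle)
  · refine le_of_forall_pos_le_add fun ε hε => ?_
    obtain ⟨M, hM⟩ := exists_nat_one_div_lt hε
    have hfr : ∃ᶠ m in atTop, 1 - ε ≤ u m := by
      rw [frequently_atTop]
      intro N
      obtain ⟨m, hm, hlt⟩ := h (max N M)
      refine ⟨m, (le_max_left _ _).trans hm.le, ?_⟩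
      have hmpos : (0 : ℝ) < m := by exact_mod_cast (Nat.zero_le _).trans_lt hm
      have h1 : 1 - 1 / (((max N M : ℕ) : ℝ) + 1) < u m := by
        rw [hu]
        refine (lt_div_iff₀ hmpos).mpr (hlt.trans_le (le_of_eq ?_))
        congr!
      have h2 : 1 / (((max N M : ℕ) : ℝ) + 1) ≤ 1 / ((M : ℝ) + 1) := by
        apply one_div_le_one_div_of_le (by positivity)
        have : (M : ℝ) ≤ ((max N M : ℕ) : ℝ) := by exact_mod_cast le_max_right N M
        linarith
      linarith
    have := le_limsup_of_frequently_le hfr hb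
    linarith

/-- If `P i` is open for every `i` and densely many points satisfy `P i` for all large `i`, then
generic points satisfy `P i` along a set of times of upper density one. -/
lemma residual_fullUpperDensity {Y : Type*} [TopologicalSpace Y] (P : ℕ → Y → Prop)
    (hopen : ∀ i, IsOpen {y | P i y}) (hdense : Dense {y | ∀ᶠ i in atTop, P i y}) :
    {y | FullUpperDensity fun i => P i y} ∈ residual Y := by
  classical
  have hset : {y | FullUpperDensity fun i => P i y} = ⋂ N : ℕ, {y | ∃ m : ℕ, N < m ∧
      (1 - 1 / ((N : ℝ) + 1)) * m <
        (((Finset.range m).filter fun i => P i y).card : ℝ)} := by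
    ext y
    simp only [FullUpperDensity, Set.mem_ofPred_eq, Set.mem_iInter]
  rw [hset]
  refine countable_iInter_mem.mpr fun N => residual_of_dense_open ?_ ?_
  · rw [isOpen_iff_mem_nhds]
    rintro y ⟨m, hm, hlt⟩
    -- The finitely many conditions `P i` holding at `y` persist nearby.
    have hev : ∀ᶠ z in 𝓝 y, ∀ i ∈ (Finset.range m).filter (fun i => P i y), P i z := by
      rw [Filter.eventually_all_finset]
      intro i hi
      exact (hopen i).mem_nhds (Finset.mem_filter.mp hi).2
    filter_upwards [hev] with z hz
    refine ⟨m, hm, hlt.trans_le (Nat.cast_le.mpr (Finset.card_le_card ?_))⟩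
    intro i hi
    exact Finset.mem_filter.mpr ⟨(Finset.mem_filter.mp hi).1, hz i hi⟩
  · refine hdense.mono ?_
    intro y hy
    obtain ⟨M, hM⟩ := eventually_atTop.mp hy
    -- At most `M` times fail, so `m > M * (N + 1)` makes the failing proportion below `1 / (N + 1)`.
    refine ⟨N + 1 + M * (N + 1), by nlinarith [Nat.zero_le (M * (N + 1))], ?_⟩
    set m := N + 1 + M * (N + 1) with hmdef
    have hMm : M ≤ m := by rw [hmdef]; nlinarith [Nat.zero_le (M * N)]
    have hsub : Finset.Ico M m ⊆ (Finset.range m).filter fun i => P i y := by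
      intro i hi
      rw [Finset.mem_Ico] at hi
      exact Finset.mem_filter.mpr ⟨Finset.mem_range.mpr hi.2, hM i hi.1⟩
    have hcard := Finset.card_le_card hsub
    rw [Nat.card_Ico] at hcard
    have h1 : (m : ℝ) - M ≤ (((Finset.range m).filter fun i => P i y).card : ℝ) := by
      rw [← Nat.cast_sub hMm]
      exact_mod_cast hcard
    refine lt_of_lt_of_le ?_ h1
    have hN : (0 : ℝ) < (N : ℝ) + 1 := by positivity
    have h2 : (1 - 1 / ((N : ℝ) + 1)) * m = m - (M + 1) := by
      rw [hmdef]
      push_cast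
      field_simp
      ring
    rw [h2]
    linarith

/-! ### Dynamics on the minimal equicontinuous set -/

section Dynamics

variable {X : Type*} [MetricSpace X] {f : X → X} {Λ : Set X}

lemma near_id_of_near_return (hf : Continuous f) (hmin : MinimalOn f Λ) (heq : EquicontOnSet f Λ)
    (hinv : Set.MapsTo f Λ Λ) {η : ℝ} (hη : 0 < η) :
    ∃ δ : ℝ, 0 < δ ∧ ∀ q ∈ Λ, ∀ i : ℕ, dist (f^[i] q) q ≤ δ → ∀ x ∈ Λ, dist (f^[i] x) x ≤ η := by
  obtain ⟨δ, hδ, h⟩ := heq η hη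
  refine ⟨δ, hδ, fun q hq i hi x hx => ?_⟩
  have hcl : IsClosed {x | dist (f^[i] x) x ≤ η} :=
    isClosed_le ((hf.iterate i).dist continuous_id) continuous_const
  have hsub : closure (Set.range fun m : ℕ => f^[m] q) ⊆ {x | dist (f^[i] x) x ≤ η} := by
    refine closure_minimal ?_ hcl
    rintro _ ⟨m, rfl⟩
    have := h _ (hinv.iterate i hq) q hq hi m
    rwa [← Function.iterate_add_apply, add_comm, Function.iterate_add_apply] at this
  rw [hmin q hq] at hsub
  exact hsub hx

/-- The orbit of any point of a minimal set comes close to any other point of it. -/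
lemma exists_iterate_near (hmin : MinimalOn f Λ) {z a : X} (hz : z ∈ Λ) (ha : a ∈ Λ) {η : ℝ}
    (hη : 0 < η) : ∃ k : ℕ, dist (f^[k] z) a < η := by
  have : a ∈ closure (Set.range fun i : ℕ => f^[i] z) := by rwa [hmin z hz]
  obtain ⟨_, ⟨k, rfl⟩, hk⟩ := Metric.mem_closure_iff.mp this η hη
  exact ⟨k, by rwa [dist_comm]⟩

/-- Distinct points of a minimal equicontinuous set have orbits bounded away from each other:
an approach at time `i` would persist until the next time `f^[t]` is close to the identity. -/
lemma exists_pair_separation (hf : Continuous f) (hmin : MinimalOn f Λ) (heq : EquicontOnSet f Λ)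
    (hinv : Set.MapsTo f Λ Λ) {a b : X} (ha : a ∈ Λ) (hb : b ∈ Λ) (hab : a ≠ b) :
    ∃ c : ℝ, 0 < c ∧ ∀ i : ℕ, c ≤ dist (f^[i] a) (f^[i] b) := by
  have hd : 0 < dist a b := dist_pos.mpr hab
  obtain ⟨δ, hδ, h⟩ := heq (dist a b / 4) (by positivity)
  obtain ⟨δ', hδ', h'⟩ := near_id_of_near_return hf hmin heq hinv (η := dist a b / 4) (by positivity)
  refine ⟨δ, hδ, fun i => ?_⟩
  by_contra! hlt
  obtain ⟨m, hm⟩ := exists_iterate_near hmin (hinv.iterate i ha) ha hδ'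
  rw [← Function.iterate_add_apply] at hm
  have hnear := h' a ha (m + i) hm.le
  have h1 := hnear a ha
  have h2 := hnear b hb
  have h3 := h _ (hinv.iterate i ha) _ (hinv.iterate i hb) hlt.le m
  rw [← Function.iterate_add_apply, ← Function.iterate_add_apply] at h3
  have h4 := dist_triangle4 a (f^[m + i] a) (f^[m + i] b) b
  rw [dist_comm a (f^[m + i] a)] at h4
  linarith

lemma exists_separation (hf : Continuous f) (hmin : MinimalOn f Λ) (heq : EquicontOnSet f Λ)
    (hinv : Set.MapsTo f Λ Λ) {n : ℕ} (a : Fin n → X) (ha : ∀ j, a j ∈ Λ)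
    (hinj : Function.Injective a) :
    ∃ c : ℝ, 0 < c ∧ ∀ (i : ℕ) (j k : Fin n), j < k → c ≤ dist (f^[i] (a j)) (f^[i] (a k)) := by
  have hpair : ∀ p : Fin n × Fin n, ∃ c : ℝ, 0 < c ∧
      (p.1 ≠ p.2 → ∀ i : ℕ, c ≤ dist (f^[i] (a p.1)) (f^[i] (a p.2))) := by
    intro p
    by_cases hp : p.1 = p.2
    · exact ⟨1, one_pos, fun h => absurd hp h⟩
    · obtain ⟨c, hc, h⟩ := exists_pair_separation hf hmin heq hinv (ha p.1) (ha p.2)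
        (fun h => hp (hinj h))
      exact ⟨c, hc, fun _ => h⟩
  choose c hc h using hpair
  obtain ⟨c₀, hc₀, hle⟩ : ∃ c₀ : ℝ, 0 < c₀ ∧ ∀ p, c₀ ≤ c p := by
    rcases isEmpty_or_nonempty (Fin n × Fin n) with he | hne
    · exact ⟨1, one_pos, fun p => he.elim p⟩
    · obtain ⟨p, hp⟩ := Finite.exists_min c
      exact ⟨c p, hc p, hp⟩
  exact ⟨c₀, hc₀, fun i j k hjk => (hle (j, k)).trans (h (j, k) hjk.ne i)⟩

/-! ### Transitions along near-identity times -/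

variable {F : Set (Set ℕ)}

lemma exists_transition (hf : Continuous f) (hmin : MinimalOn f Λ) (heq : EquicontOnSet f Λ)
    (hinv : Set.MapsTo f Λ Λ) (hrec : (Λ ∩ FRecurrent f F).Nonempty)
    (htrans : FTransitive f (dualFamily (deltaFamily F))) {U V : Set X} (hU : IsOpen U)
    (hV : IsOpen V) (hUne : U.Nonempty) (hVne : V.Nonempty) {η : ℝ} (hη : 0 < η) :
    ∃ i : ℕ, (∃ x ∈ U, f^[i] x ∈ V) ∧ ∀ x ∈ Λ, dist (f^[i] x) x ≤ η := by
  obtain ⟨p, hpΛ, hp⟩ := hrec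
  obtain ⟨δ, hδ, h⟩ := near_id_of_near_return hf hmin heq hinv hη
  have hmem : deltaSet (retTimes f p (δ / 2)) ∈ deltaFamily F :=
    ⟨_, hp (δ / 2) (by positivity), by simp [retTimes]; positivity, subset_rfl⟩
  obtain ⟨i, hi, j, hj, k, hk, hjk, rfl⟩ := htrans U V hU hV hUne hVne _ hmem
  refine ⟨k - j, hi, h (f^[j] p) (hinv.iterate j hpΛ) _ ?_⟩
  rw [← Function.iterate_add_apply, Nat.sub_add_cancel hjk]
  have hj' : dist p (f^[j] p) ≤ δ / 2 := hj
  have hk' : dist p (f^[k] p) ≤ δ / 2 := hk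
  have := dist_triangle_left (f^[k] p) (f^[j] p) p
  linarith

/-- Transitivity on a nontrivial space forces dense range. The two points are used to exclude the
transition time `0`. -/
lemma preimage_iterate_nonempty [Nontrivial X] (hf : Continuous f)
    (htrans : FTransitive f (dualFamily (deltaFamily F)))
    (hrec : (Λ ∩ FRecurrent f F).Nonempty) (k : ℕ) :
    ∀ V : Set X, IsOpen V → V.Nonempty → (f^[k] ⁻¹' V).Nonempty := by
  induction k with
  | zero => intro V _ hV; simpa using hV
  | succ k ih =>
    intro V hV hVne
    obtain ⟨v, hv⟩ := hVne
    obtain ⟨u, hu⟩ := exists_ne v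
    obtain ⟨A, B, hA, hB, huA, hvB, hdisj⟩ := t2_separation hu
    obtain ⟨p, -, hp⟩ := hrec
    have hmem : deltaSet (retTimes f p 1) ∈ deltaFamily F :=
      ⟨_, hp 1 one_pos, by simp [retTimes], subset_rfl⟩
    obtain ⟨i, ⟨x, hxA, hxB⟩, -⟩ :=
      htrans A (V ∩ B) hA (hV.inter hB) ⟨u, huA⟩ ⟨v, hv, hvB⟩ _ hmem
    cases i with
    | zero => exact absurd hxB.2 (Set.disjoint_left.mp hdisj hxA)
    | succ i =>
      rw [Function.iterate_succ_apply'] at hxB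
      obtain ⟨y, hy⟩ := ih (f ⁻¹' V) (hV.preimage hf) ⟨f^[i] x, hxB.1⟩
      refine ⟨y, ?_⟩
      rw [Set.mem_preimage, Function.iterate_succ_apply']
      exact hy

/-- An open part of `U` returns to `U` after times `i + k` for all `k` in a prescribed finite set,
with `f^[i]` close to the identity on `Λ`. -/
lemma exists_simultaneous_returns [Nontrivial X] (hf : Continuous f) (hmin : MinimalOn f Λ)
    (heq : EquicontOnSet f Λ) (hinv : Set.MapsTo f Λ Λ) (hrec : (Λ ∩ FRecurrent f F).Nonempty)
    (htrans : FTransitive f (dualFamily (deltaFamily F))) {U : Set X} (hU : IsOpen U)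
    (hUne : U.Nonempty) {η : ℝ} (hη : 0 < η) (K : Finset ℕ) :
    ∃ W : Set X, IsOpen W ∧ W.Nonempty ∧ W ⊆ U ∧ ∀ k ∈ K, ∃ i : ℕ,
      (∀ y ∈ W, f^[k + i] y ∈ U) ∧ ∀ x ∈ Λ, dist (f^[i] x) x ≤ η := by
  induction K using Finset.induction_on with
  | empty => exact ⟨U, hU, hUne, subset_rfl, by simp⟩
  | insert k K _ ih =>
    obtain ⟨W, hW, hWne, hWU, h⟩ := ih
    have hkU : IsOpen (f^[k] ⁻¹' U) := hU.preimage (hf.iterate k)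
    obtain ⟨i, ⟨x, hxW, hxU⟩, hi⟩ := exists_transition hf hmin heq hinv hrec htrans hW hkU hWne
      (preimage_iterate_nonempty hf htrans hrec k U hU hUne) hη
    refine ⟨W ∩ f^[i] ⁻¹' (f^[k] ⁻¹' U), hW.inter (hkU.preimage (hf.iterate i)), ⟨x, hxW, hxU⟩,
      Set.inter_subset_left.trans hWU, ?_⟩
    intro l hl
    rcases Finset.mem_insert.mp hl with rfl | hl
    · refine ⟨i, fun y hy => ?_, hi⟩
      rw [Function.iterate_add_apply]
      exact hy.2
    · obtain ⟨i', h1, h2⟩ := h l hl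
      exact ⟨i', fun y hy => h1 y hy.1, h2⟩

/-- For each single `a ∈ Λ`, the points eventually `ε`-shadowing the orbit of `a` are dense. -/
lemma dense_shadow [Nontrivial X] [CompactSpace X] (hf : Continuous f) (hclosed : IsClosed Λ)
    (hmin : MinimalOn f Λ) (heq : EquicontOnSet f Λ) (hinv : Set.MapsTo f Λ Λ)
    (hunion : ∀ ε : ℝ, 0 < ε → Dense (⋃ x ∈ Λ, Vs f x ε))
    (hrec : (Λ ∩ FRecurrent f F).Nonempty)
    (htrans : FTransitive f (dualFamily (deltaFamily F))) {a : X} (ha : a ∈ Λ) {ε : ℝ}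
    (hε : 0 < ε) : Dense {y | ∀ᶠ i in atTop, dist (f^[i] a) (f^[i] y) < ε} := by
  rw [dense_iff_inter_open]
  intro U hU hUne
  obtain ⟨δ, hδ, hequi⟩ := heq (ε / 2) (by positivity)
  obtain ⟨K, hK⟩ := hclosed.isCompact.elim_finite_subcover
    (fun k : ℕ => {z | dist (f^[k] z) a < δ / 2})
    (fun k => isOpen_lt ((hf.iterate k).dist continuous_const) continuous_const)
    (fun z hz => Set.mem_iUnion.mpr (exists_iterate_near hmin hz ha (by positivity)))
  obtain ⟨W, hW, hWne, -, hret⟩ := exists_simultaneous_returns hf hmin heq hinv hrec htrans hU hUne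
    (η := δ / 2) (by positivity) K
  obtain ⟨y, hyW, hy⟩ := (dense_iff_inter_open.mp (hunion (ε / 4) (by positivity))) W hW hWne
  obtain ⟨z, hz, hyz⟩ : ∃ z ∈ Λ, y ∈ Vs f z (ε / 4) := by simpa using hy
  have hshadow : ∀ᶠ i in atTop, dist (f^[i] z) (f^[i] y) < ε / 2 := by
    refine eventually_lt_of_limsup_lt (lt_of_le_of_lt hyz (by linarith)) ?_
    exact isBoundedUnder_of ⟨Metric.diam (Set.univ : Set X), fun i =>
      Metric.dist_le_diam_of_mem (isCompact_univ (X := X)).isBounded trivial trivial⟩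
  obtain ⟨k, hkK, hk⟩ : ∃ k ∈ K, dist (f^[k] z) a < δ / 2 := by simpa using hK hz
  obtain ⟨i, hiU, hi⟩ := hret k hkK
  refine ⟨f^[k + i] y, hiU y hyW, ?_⟩
  have hclose : dist a (f^[k + i] z) ≤ δ := by
    have h1 := hi (f^[k] z) (hinv.iterate k hz)
    rw [← Function.iterate_add_apply, add_comm] at h1
    have h2 := dist_triangle_left a (f^[k + i] z) (f^[k] z)
    rw [dist_comm (f^[k] z) (f^[k + i] z)] at h2
    linarith
  have hshift := (tendsto_add_atTop_nat (k + i)).eventually hshadow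
  filter_upwards [hshift] with m hm
  have h3 := hequi a ha _ (hinv.iterate (k + i) hz) hclose m
  rw [← Function.iterate_add_apply] at h3
  rw [← Function.iterate_add_apply]
  have := dist_triangle (f^[m] a) (f^[m + (k + i)] z) (f^[m + (k + i)] y)
  linarith

end Dynamics

/-- Corollary 1.2: the Furstenberg-family version of Theorem 1.1. -/
theorem dc1_furstenberg {X : Type*} [MetricSpace X] [CompactSpace X]
    (f : X → X) (hf : Continuous f) (Λ : Set X)
    (hclosed : IsClosed Λ) (hinv : Set.MapsTo f Λ Λ)
    (F : Set (Set ℕ))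
    (hup : ∀ A B : Set ℕ, A ∈ F → A ⊆ B → B ∈ F)
    (hne : F.Nonempty) (hproper : F ≠ Set.univ)
    (hmin : MinimalOn f Λ) (heq : EquicontOnSet f Λ)
    (hunion : ∀ ε : ℝ, 0 < ε → Dense (⋃ x ∈ Λ, Vs f x ε))
    (hrec : (Λ ∩ FRecurrent f F).Nonempty)
    (htrans : FTransitive f (dualFamily (deltaFamily F))) :
    ∀ n : ℕ, 2 ≤ n → (n : Cardinal) < Cardinal.mk Λ + 1 →
      ∃ δ : ℝ, 0 < δ ∧ {x : Fin n → X | DC1Scrambled f δ x} ∈ residual (Fin n → X) := by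
  intro n hn hcard
  have hle : (n : Cardinal) ≤ Cardinal.mk Λ :=
    Order.lt_succ_iff.mp (hcard.trans_le (Cardinal.add_one_le_of_lt (Order.lt_succ _)))
  obtain ⟨e⟩ : Nonempty (Fin n ↪ Λ) := by
    rw [← Cardinal.lift_mk_le']
    simpa using hle
  have hinj : Function.Injective fun j => (e j : X) := Subtype.val_injective.comp e.injective
  have : Nontrivial X := by
    have : Nontrivial (Fin n) := Fin.nontrivial_iff_two_le.mpr hn
    exact hinj.nontrivial
  obtain ⟨c, hc, hsep⟩ := exists_separation hf hmin heq hinv (fun j => (e j : X))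
    (fun j => (e j).2) hinj
  -- Tuples shadowing a prescribed tuple of points of `Λ` are dense.
  have hdense : ∀ (a : Fin n → X), (∀ j, a j ∈ Λ) → ∀ ε : ℝ, 0 < ε →
      Dense {x : Fin n → X | ∀ᶠ i in atTop, ∀ j, dist (f^[i] (a j)) (f^[i] (x j)) < ε} := by
    intro a ha ε hε
    have hpi := dense_pi (Set.univ : Set (Fin n)) fun j _ =>
      dense_shadow hf hclosed hmin heq hinv hunion hrec htrans (ha j) hε
    refine hpi.mono fun x hx => ?_
    exact eventually_all.mpr fun j => hx j trivial
  have hcont : ∀ (i : ℕ) (j k : Fin n),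
      Continuous fun x : Fin n → X => dist (f^[i] (x j)) (f^[i] (x k)) := fun i j k =>
    ((hf.iterate i).comp (continuous_apply j)).dist ((hf.iterate i).comp (continuous_apply k))
  have hfar : {x : Fin n → X | FullUpperDensity fun i => ∀ j k : Fin n, j < k →
      c / 2 < dist (f^[i] (x j)) (f^[i] (x k))} ∈ residual (Fin n → X) := by
    refine residual_fullUpperDensity
      (fun i (x : Fin n → X) => ∀ j k : Fin n, j < k → c / 2 < dist (f^[i] (x j)) (f^[i] (x k)))
      (fun i => ?_) ?_
    · simp only [Set.ofPred_forall]
      exact isOpen_iInter_of_finite fun j => isOpen_iInter_of_finite fun k =>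
        isOpen_iInter_of_finite fun _ => isOpen_lt continuous_const (hcont i j k)
    · refine (hdense (fun j => (e j : X)) (fun j => (e j).2) (c / 4) (by positivity)).mono ?_
      intro x hx
      filter_upwards [hx] with i hi j k hjk
      have h1 := hsep i j k hjk
      have h2 := hi j
      have h3 := hi k
      have h4 := dist_triangle4 (f^[i] (e j : X)) (f^[i] (x j)) (f^[i] (x k)) (f^[i] (e k : X))
      rw [dist_comm (f^[i] (x k))] at h4
      linarith
  have hnear : ∀ r : ℕ, {x : Fin n → X | FullUpperDensity fun i => ∀ j k : Fin n, j < k →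
      dist (f^[i] (x j)) (f^[i] (x k)) < 1 / ((r : ℝ) + 1)} ∈ residual (Fin n → X) := by
    intro r
    refine residual_fullUpperDensity
      (fun i (x : Fin n → X) => ∀ j k : Fin n, j < k →
        dist (f^[i] (x j)) (f^[i] (x k)) < 1 / ((r : ℝ) + 1))
      (fun i => ?_) ?_
    · simp only [Set.ofPred_forall]
      exact isOpen_iInter_of_finite fun j => isOpen_iInter_of_finite fun k =>
        isOpen_iInter_of_finite fun _ => isOpen_lt (hcont i j k) continuous_const
    · obtain ⟨p, hp, -⟩ := hrec
      refine (hdense (fun _ => p) (fun _ => hp) (1 / ((r : ℝ) + 1) / 2) (by positivity)).mono ?_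
      intro x hx
      filter_upwards [hx] with i hi j k _
      have h2 := hi j
      have h3 := hi k
      have h4 := dist_triangle_left (f^[i] (x j)) (f^[i] (x k)) (f^[i] p)
      linarith
  refine ⟨c / 2, by positivity, ?_⟩
  filter_upwards [hfar, countable_iInter_mem.mpr hnear] with x hx hx'
  refine ⟨FullUpperDensity.limsup_eq hx, fun ε hε => ?_⟩
  obtain ⟨r, hr⟩ := exists_nat_one_div_lt hε
  exact FullUpperDensity.limsup_eq ((Set.mem_iInter.mp hx' r).mono
    fun i h j k hjk => (h j k hjk).trans hr)
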